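/- (First-order ε-optimum exponent for a mixed memoryless null hypothesis against a memoryless alternative.) Let 𝒳 be a finite alphabet, (Θ, w) a probability space, {P_θ} a measurable family of distributions on 𝒳, and let the null hypothesis be the mixed memoryless source P_{X^n}(x) = ∫_Θ ∏_{i=1}^n P_θ(x_i) dw(θ). Let the alternative hypothesis be the stationary memoryless source P_{X̄^n}(x) = ∏_{i=1}^n P_{X̄}(x_i) where P_{X̄} is a distribution on 𝒳 with P_{X̄}(x) > 0 for all x ∈ 𝒳. Then for every ε with 0 ≤ ε < 1, B_ε(X‖X̄) = sup{ R ∈ ℝ : w({ θ : D(P_θ‖P_{X̄}) < R }) ≤ ε }, where D(P‖Q) = Σ_{x∈𝒳} P(x) log( P(x)/Q(x) ) is the Kullback–Leibler divergence. -/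

import Mathlib

open scoped BigOperators
open MeasureTheory

/-- Probability of a set `A` under a distribution `P` on a finite type. -/
noncomputable def prob {α : Type*} [Fintype α] (P : α → ℝ) (A : Set α) : ℝ :=
  ∑ x, A.indicator P x

/-- Type I error probability `μ_n = Pr{X^n ∉ A_n}` of the acceptance regions `A`
for the general source `X`. -/
noncomputable def typeI {𝒳 : Type*} [Fintype 𝒳] (X : (n : ℕ) → (Fin n → 𝒳) → ℝ)
    (A : (n : ℕ) → Set (Fin n → 𝒳)) (n : ℕ) : ℝ :=
  prob (X n) ((A n)ᶜ)

/-- Type II error probability `λ_n = Pr{X̄^n ∈ A_n}` of the acceptance regions `A`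
for the general source `X̄`. -/
noncomputable def typeII {𝒳 : Type*} [Fintype 𝒳] (Xbar : (n : ℕ) → (Fin n → 𝒳) → ℝ)
    (A : (n : ℕ) → Set (Fin n → 𝒳)) (n : ℕ) : ℝ :=
  prob (Xbar n) (A n)

/-- `R` is `ε`-achievable: there are acceptance regions with
`limsup μ_n ≤ ε` and `liminf (1/n) log (1/λ_n) ≥ R`. -/
def EpsAchievable {𝒳 : Type*} [Fintype 𝒳] (X Xbar : (n : ℕ) → (Fin n → 𝒳) → ℝ)
    (ε R : ℝ) : Prop :=
  ∃ A : (n : ℕ) → Set (Fin n → 𝒳),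
    Filter.limsup (typeI X A) Filter.atTop ≤ ε ∧
    R ≤ Filter.liminf (fun n : ℕ => (1 / (n : ℝ)) * Real.log (1 / typeII Xbar A n))
      Filter.atTop

/-- The first-order `ε`-optimum exponent `B_ε(X‖X̄)`. -/
noncomputable def Beps {𝒳 : Type*} [Fintype 𝒳]
    (X Xbar : (n : ℕ) → (Fin n → 𝒳) → ℝ) (ε : ℝ) : ℝ :=
  sSup {R : ℝ | EpsAchievable X Xbar ε R}

/-- Kullback–Leibler divergence `D(P‖Q) = ∑_x P(x) log (P(x)/Q(x))` on a finite alphabet. -/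
noncomputable def KL {𝒳 : Type*} [Fintype 𝒳] (P Q : 𝒳 → ℝ) : ℝ :=
  ∑ x, P x * Real.log (P x / Q x)

/-!
Under `P_θ^n` the log-likelihood ratio `log (P_θ^n / Q^n)` concentrates around `n D(P_θ‖Q)`, by
Chebyshev with a second-moment bound that does not depend on `θ`.

*Converse.* If `Q^n(A_n) ≤ e^{-nR}`, a change of measure from `P_θ^n` to `Q^n`
gives `P_θ^n(A_n) → 0` uniformly on `D(P_θ‖Q) < R - δ`, so the type I error is asymptotically at
least the `w`-mass of these `θ`.

*Achievability.* The test must not depend on `θ`. By compactness of the simplex, finitely many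
distributions `q` suffice for each `p` to satisfy `p ≤ e^δ q` pointwise for one of them; hence
`M_n = ∑_q q^n` has bounded total mass and `P_θ^n ≤ e^{nδ} M_n` for all `θ` at once. The
Neyman–Pearson test of `M_n` against `Q^n` at level `R - 2δ` has type II error `O(e^{-n(R-2δ)})`
and accepts with high probability under every `P_θ` with `D(P_θ‖Q) ≥ R`.
-/

section FiniteProbability

variable {α : Type*} [Fintype α] {P Q M : α → ℝ} {A B : Set α} {c : ℝ}

lemma prob_nonneg (hP : ∀ x, 0 ≤ P x) (A : Set α) : 0 ≤ prob P A :=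
  Finset.sum_nonneg fun x _ => Set.indicator_nonneg (fun y _ => hP y) x

lemma prob_univ (P : α → ℝ) : prob P Set.univ = ∑ x, P x := by
  simp only [prob, Set.indicator_univ]

lemma prob_add_compl_eq_sum (P : α → ℝ) (A : Set α) : prob P A + prob P Aᶜ = ∑ x, P x := by
  simp only [prob, ← Finset.sum_add_distrib, Set.indicator_self_add_compl_apply]

lemma prob_compl_of_mem_stdSimplex (hP : P ∈ stdSimplex ℝ α) (A : Set α) :
    prob P Aᶜ = 1 - prob P A := by
  rw [eq_sub_iff_add_eq', prob_add_compl_eq_sum, hP.2]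

lemma prob_le_one_of_mem_stdSimplex (hP : P ∈ stdSimplex ℝ α) (A : Set α) : prob P A ≤ 1 := by
  have := prob_nonneg hP.1 Aᶜ
  rw [prob_compl_of_mem_stdSimplex hP] at this
  linarith

lemma apply_le_prob (hP : ∀ x, 0 ≤ P x) {x : α} (hx : x ∈ A) : P x ≤ prob P A := by
  have := Finset.single_le_sum (f := A.indicator P)
    (fun y _ => Set.indicator_nonneg (fun z _ => hP z) y) (Finset.mem_univ x)
  rwa [Set.indicator_of_mem hx] at this

lemma prob_le_prob_of_forall_ne_zero (hP : ∀ x, 0 ≤ P x) (h : ∀ x ∈ A, P x ≠ 0 → x ∈ B) :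
    prob P A ≤ prob P B := by
  refine Finset.sum_le_sum fun x _ => Set.indicator_le' (fun y hyA => ?_)
    (fun y _ => Set.indicator_nonneg (fun z _ => hP z) y) x
  rcases eq_or_ne (P y) 0 with hy | hy
  · rw [hy]
    exact Set.indicator_nonneg (fun z _ => hP z) y
  · rw [Set.indicator_of_mem (h y hyA hy)]

lemma mul_prob_le_sum (hM : ∀ x, 0 ≤ M x) (h : ∀ x ∈ A, c * Q x ≤ M x) :
    c * prob Q A ≤ ∑ x, M x := by
  rw [prob, Finset.mul_sum]
  refine Finset.sum_le_sum fun x _ => ?_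
  by_cases hx : x ∈ A
  · rw [Set.indicator_of_mem hx]
    exact h x hx
  · rw [Set.indicator_of_notMem hx, mul_zero]
    exact hM x

lemma prob_le_prob_likelihood_add (hP : ∀ x, 0 ≤ P x) (hQ : ∀ x, 0 ≤ Q x) (hc : 0 ≤ c)
    (A : Set α) : prob P A ≤ prob P {x | c * Q x < P x} + c * prob Q A := by
  simp only [prob]
  rw [Finset.mul_sum, ← Finset.sum_add_distrib]
  refine Finset.sum_le_sum fun x _ => ?_
  by_cases hxA : x ∈ A
  · rw [Set.indicator_of_mem hxA, Set.indicator_of_mem hxA]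
    by_cases hx : x ∈ {x | c * Q x < P x}
    · rw [Set.indicator_of_mem hx]
      exact le_add_of_nonneg_right (mul_nonneg hc (hQ x))
    · rw [Set.indicator_of_notMem hx, zero_add]
      exact not_lt.1 hx
  · rw [Set.indicator_of_notMem hxA, Set.indicator_of_notMem hxA, mul_zero, add_zero]
    exact Set.indicator_nonneg (fun y _ => hP y) x

end FiniteProbability

section MemorylessSource

variable {𝒳 : Type*} {p : 𝒳 → ℝ} {n : ℕ}

/-- The stationary memoryless source `x ↦ ∏ᵢ p(xᵢ)` with single-letter distribution `p`. -/
def iidSource (p : 𝒳 → ℝ) (n : ℕ) (x : Fin n → 𝒳) : ℝ :=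
  ∏ i, p (x i)

lemma iidSource_nonneg (hp : ∀ a, 0 ≤ p a) (x : Fin n → 𝒳) : 0 ≤ iidSource p n x :=
  Finset.prod_nonneg fun i _ => hp (x i)

lemma iidSource_pos (hp : ∀ a, 0 < p a) (x : Fin n → 𝒳) : 0 < iidSource p n x :=
  Finset.prod_pos fun i _ => hp (x i)

lemma iidSource_mem_stdSimplex [Fintype 𝒳] (hp : p ∈ stdSimplex ℝ 𝒳) (n : ℕ) :
    iidSource p n ∈ stdSimplex ℝ (Fin n → 𝒳) :=
  ⟨iidSource_nonneg hp.1, by simp only [iidSource, ← Fintype.sum_pow, hp.2, one_pow]⟩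

end MemorylessSource

section Chebyshev

open ProbabilityTheory

variable {α : Type*} [Fintype α] {p : α → ℝ}

/-- A point of the standard simplex as a `PMF`, giving access to measure-theoretic moments. -/
noncomputable def simplexPMF (p : α → ℝ) (hp : p ∈ stdSimplex ℝ α) : PMF α :=
  PMF.ofFintype (fun a => ENNReal.ofReal (p a)) <| by
    rw [← ENNReal.ofReal_sum_of_nonneg fun a _ => hp.1 a, hp.2, ENNReal.ofReal_one]

lemma simplexPMF_apply (hp : p ∈ stdSimplex ℝ α) (a : α) :
    simplexPMF p hp a = ENNReal.ofReal (p a) :=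
  rfl

section PMFMeasure

variable [MeasurableSpace α] [MeasurableSingletonClass α]

lemma integral_simplexPMF (hp : p ∈ stdSimplex ℝ α) (f : α → ℝ) :
    ∫ a, f a ∂(simplexPMF p hp).toMeasure = ∑ a, p a * f a := by
  simp only [PMF.integral_eq_sum, simplexPMF_apply, ENNReal.toReal_ofReal (hp.1 _), smul_eq_mul]

lemma simplexPMF_toMeasure_apply (hp : p ∈ stdSimplex ℝ α) (A : Set α) :
    (simplexPMF p hp).toMeasure A = ENNReal.ofReal (prob p A) := by
  rw [PMF.toMeasure_apply_fintype, prob,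
    ENNReal.ofReal_sum_of_nonneg fun a _ => Set.indicator_nonneg (fun b _ => hp.1 b) a]
  refine Finset.sum_congr rfl fun a _ => ?_
  by_cases ha : a ∈ A <;> simp [ha, simplexPMF_apply]

lemma pi_simplexPMF_toMeasure (hp : p ∈ stdSimplex ℝ α) (n : ℕ) :
    Measure.pi (fun _ : Fin n => (simplexPMF p hp).toMeasure) =
      (simplexPMF (iidSource p n) (iidSource_mem_stdSimplex hp n)).toMeasure := by
  refine Measure.ext_of_singleton fun x => ?_
  rw [Measure.pi_singleton, PMF.toMeasure_apply_singleton _ _ (measurableSet_singleton x),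
    simplexPMF_apply, iidSource, ENNReal.ofReal_prod_of_nonneg fun i _ => hp.1 (x i)]
  exact Finset.prod_congr rfl fun i _ =>
    PMF.toMeasure_apply_singleton _ _ (measurableSet_singleton (x i))

lemma variance_sum_pi_simplexPMF_le (hp : p ∈ stdSimplex ℝ α) (f : α → ℝ) (n : ℕ) :
    Var[fun x => ∑ i, f (x i); Measure.pi fun _ : Fin n => (simplexPMF p hp).toMeasure] ≤
      n * ∑ a, p a * f a ^ 2 := by
  have hvar := variance_sum_pi (μ := fun _ : Fin n => (simplexPMF p hp).toMeasure)
    (X := fun _ => f) fun _ => MemLp.of_discrete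
  rw [Finset.sum_fn] at hvar
  rw [hvar, Finset.sum_const, Finset.card_univ, Fintype.card_fin, nsmul_eq_mul,
    ← integral_simplexPMF hp]
  gcongr
  exact variance_le_expectation_sq .of_discrete

end PMFMeasure

theorem prob_iidSource_abs_sum_sub_ge_le (hp : p ∈ stdSimplex ℝ α) (f : α → ℝ) {n : ℕ}
    (hn : 0 < n) {γ : ℝ} (hγ : 0 < γ) :
    prob (iidSource p n) {x | n * γ ≤ |∑ i, f (x i) - n * ∑ a, p a * f a|} ≤
      (∑ a, p a * f a ^ 2) / (n * γ ^ 2) := by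
  let _ : MeasurableSpace α := ⊤
  set ν := Measure.pi fun _ : Fin n => (simplexPMF p hp).toMeasure with hν
  have hmean : ∫ x, ∑ i, f (x i) ∂ν = n * ∑ a, p a * f a := by
    rw [integral_finsetSum _ fun i _ => Integrable.of_finite]
    simp only [hν, integral_comp_eval (μ := fun _ : Fin n => (simplexPMF p hp).toMeasure)
      AEStronglyMeasurable.of_discrete, integral_simplexPMF, Finset.sum_const, Finset.card_univ,
      Fintype.card_fin, nsmul_eq_mul]
  have hcheb := meas_ge_le_variance_div_sq (μ := ν) (X := fun x => ∑ i, f (x i))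
    MemLp.of_discrete (c := n * γ) (by positivity)
  rw [hmean, hν, pi_simplexPMF_toMeasure, simplexPMF_toMeasure_apply, ← pi_simplexPMF_toMeasure,
    ENNReal.ofReal_le_ofReal_iff (div_nonneg (variance_nonneg _ _) (sq_nonneg _))] at hcheb
  calc _ ≤ _ := hcheb
    _ ≤ (n * ∑ a, p a * f a ^ 2) / (n * γ) ^ 2 := by
      gcongr
      exact variance_sum_pi_simplexPMF_le hp f n
    _ = _ := by field_simp

end Chebyshev

section LikelihoodRatio

variable {𝒳 : Type*} {p Q : 𝒳 → ℝ} {n : ℕ} {γ : ℝ}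

lemma mul_log_div_sq_le {s t : ℝ} (hs0 : 0 ≤ s) (hs1 : s ≤ 1) (ht : 0 < t) :
    s * Real.log (s / t) ^ 2 ≤ 8 + 2 * Real.log t ^ 2 := by
  rcases hs0.eq_or_lt with rfl | hs
  · rw [zero_mul]
    positivity
  have hlog : s * Real.log s ^ 2 ≤ 4 := by
    have h := sq_lt_one_iff_abs_lt_one _ |>.2 <|
      Real.abs_log_mul_self_lt √s (Real.sqrt_pos.2 hs) (Real.sqrt_le_one.2 hs1)
    rw [mul_pow, Real.sq_sqrt hs0, Real.log_sqrt hs0] at h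
    linarith
  calc s * Real.log (s / t) ^ 2
      = s * (Real.log s - Real.log t) ^ 2 := by rw [Real.log_div hs.ne' ht.ne']
    _ ≤ s * (2 * Real.log s ^ 2 + 2 * Real.log t ^ 2) := by
      gcongr
      linarith [sq_nonneg (Real.log s + Real.log t)]
    _ = 2 * (s * Real.log s ^ 2) + s * (2 * Real.log t ^ 2) := by ring
    _ ≤ 2 * 4 + 1 * (2 * Real.log t ^ 2) := by gcongr
    _ = 8 + 2 * Real.log t ^ 2 := by ring

lemma iidSource_eq_exp_sum_log_mul (hp : ∀ a, 0 ≤ p a) (hQ : ∀ a, 0 < Q a) {x : Fin n → 𝒳}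
    (hx : iidSource p n x ≠ 0) :
    iidSource p n x = Real.exp (∑ i, Real.log (p (x i) / Q (x i))) * iidSource Q n x := by
  rw [Real.exp_sum, iidSource, iidSource, ← Finset.prod_mul_distrib]
  refine Finset.prod_congr rfl fun i _ => ?_
  have hpi : 0 < p (x i) := (hp _).lt_of_ne' (Finset.prod_ne_zero_iff.1 hx i (Finset.mem_univ i))
  rw [Real.exp_log (div_pos hpi (hQ _)), div_mul_cancel₀ _ (hQ _).ne']

variable [Fintype 𝒳]

/-- A bound on the second moment of `log (p / Q)` under `p` which is uniform in `p`. -/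
noncomputable def llrSecondMomentBound (Q : 𝒳 → ℝ) : ℝ :=
  ∑ a, (8 + 2 * Real.log (Q a) ^ 2)

lemma llrSecondMomentBound_nonneg (Q : 𝒳 → ℝ) : 0 ≤ llrSecondMomentBound Q :=
  Finset.sum_nonneg fun _ _ => by positivity

lemma sum_mul_log_div_sq_le (hp : p ∈ stdSimplex ℝ 𝒳) (hQ : ∀ a, 0 < Q a) :
    ∑ a, p a * Real.log (p a / Q a) ^ 2 ≤ llrSecondMomentBound Q :=
  Finset.sum_le_sum fun a _ =>
    mul_log_div_sq_le (hp.1 a) (mem_Icc_of_mem_stdSimplex hp a).2 (hQ a)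

lemma prob_abs_sum_log_sub_KL_ge_le (hp : p ∈ stdSimplex ℝ 𝒳) (hQ : ∀ a, 0 < Q a) (hn : 0 < n)
    (hγ : 0 < γ) :
    prob (iidSource p n) {x | n * γ ≤ |∑ i, Real.log (p (x i) / Q (x i)) - n * KL p Q|} ≤
      llrSecondMomentBound Q / (n * γ ^ 2) := by
  refine (prob_iidSource_abs_sum_sub_ge_le hp (fun a => Real.log (p a / Q a)) hn hγ).trans ?_
  gcongr
  exact sum_mul_log_div_sq_le hp hQ

lemma prob_exp_KL_add_mul_lt_iidSource_le (hp : p ∈ stdSimplex ℝ 𝒳) (hQ : ∀ a, 0 < Q a)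
    (hn : 0 < n) (hγ : 0 < γ) :
    prob (iidSource p n) {x | Real.exp (n * (KL p Q + γ)) * iidSource Q n x < iidSource p n x} ≤
      llrSecondMomentBound Q / (n * γ ^ 2) := by
  refine (prob_le_prob_of_forall_ne_zero (iidSource_nonneg hp.1) fun x hx hx0 => ?_).trans
    (prob_abs_sum_log_sub_KL_ge_le hp hQ hn hγ)
  rw [Set.mem_ofPred_eq, iidSource_eq_exp_sum_log_mul hp.1 hQ hx0,
    mul_lt_mul_iff_left₀ (iidSource_pos hQ x), Real.exp_lt_exp] at hx
  rw [Set.mem_ofPred_eq, le_abs]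
  exact .inl (by linarith)

lemma prob_iidSource_lt_exp_KL_sub_mul_le (hp : p ∈ stdSimplex ℝ 𝒳) (hQ : ∀ a, 0 < Q a)
    (hn : 0 < n) (hγ : 0 < γ) :
    prob (iidSource p n) {x | iidSource p n x < Real.exp (n * (KL p Q - γ)) * iidSource Q n x} ≤
      llrSecondMomentBound Q / (n * γ ^ 2) := by
  refine (prob_le_prob_of_forall_ne_zero (iidSource_nonneg hp.1) fun x hx hx0 => ?_).trans
    (prob_abs_sum_log_sub_KL_ge_le hp hQ hn hγ)
  rw [Set.mem_ofPred_eq, iidSource_eq_exp_sum_log_mul hp.1 hQ hx0,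
    mul_lt_mul_iff_left₀ (iidSource_pos hQ x), Real.exp_lt_exp] at hx
  rw [Set.mem_ofPred_eq, le_abs]
  exact .inr (by linarith)

end LikelihoodRatio

section UniversalMajorant

variable {𝒳 : Type*} [Fintype 𝒳]

lemma exists_mem_stdSimplex_forall_lt_mul {C : ℝ} (hC : 1 < C) {p : 𝒳 → ℝ}
    (hp : p ∈ stdSimplex ℝ 𝒳) : ∃ q ∈ stdSimplex ℝ 𝒳, ∀ a, p a < C * q a := by
  have : Nonempty 𝒳 := by
    by_contra h
    rw [not_nonempty_iff] at h
    simpa using hp.2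
  have hC0 : 0 < C := by linarith
  refine ⟨C⁻¹ • p + (1 - C⁻¹) • (stdSimplex.barycenter : stdSimplex ℝ 𝒳).val,
    convex_stdSimplex ℝ 𝒳 hp stdSimplex.barycenter.2 (inv_nonneg.2 hC0.le)
      (sub_nonneg.2 (inv_le_one_of_one_le₀ hC.le)) (by ring), fun a => ?_⟩
  have hpos : 0 < (C - 1) * (Fintype.card 𝒳 : ℝ)⁻¹ :=
    mul_pos (sub_pos.2 hC) (inv_pos.2 (Nat.cast_pos.2 Fintype.card_pos))
  calc p a < p a + (C - 1) * (Fintype.card 𝒳 : ℝ)⁻¹ := by linarith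
    _ = _ := by
      simp only [Pi.add_apply, Pi.smul_apply, smul_eq_mul, stdSimplex.barycenter_apply]
      field_simp

lemma exists_finset_forall_mem_stdSimplex_le_mul {C : ℝ} (hC : 1 < C) :
    ∃ t : Finset (stdSimplex ℝ 𝒳),
      ∀ p ∈ stdSimplex ℝ 𝒳, ∃ q ∈ t, ∀ a, p a ≤ C * (q : 𝒳 → ℝ) a := by
  obtain ⟨t, ht⟩ := (isCompact_stdSimplex ℝ 𝒳).elim_finite_subcover
    (fun q : stdSimplex ℝ 𝒳 => ⋂ a, {p : 𝒳 → ℝ | p a < C * (q : 𝒳 → ℝ) a})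
    (fun q => isOpen_iInter_of_finite fun a => isOpen_lt (continuous_apply a) continuous_const)
    (fun p hp => by
      obtain ⟨q, hq, hpq⟩ := exists_mem_stdSimplex_forall_lt_mul hC hp
      exact Set.mem_iUnion.2 ⟨⟨q, hq⟩, Set.mem_iInter.2 hpq⟩)
  refine ⟨t, fun p hp => ?_⟩
  obtain ⟨q, hqt, hpq⟩ := Set.mem_iUnion₂.1 (ht hp)
  exact ⟨q, hqt, fun a => (Set.mem_iInter.1 hpq a).le⟩

theorem exists_iidSource_le_exp_mul (𝒳 : Type*) [Fintype 𝒳] {δ : ℝ} (hδ : 0 < δ) :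
    ∃ (K : ℝ) (M : (n : ℕ) → (Fin n → 𝒳) → ℝ),
      (∀ n x, 0 ≤ M n x) ∧ (∀ n, ∑ x, M n x = K) ∧
      ∀ p ∈ stdSimplex ℝ 𝒳, ∀ n x, iidSource p n x ≤ Real.exp (n * δ) * M n x := by
  obtain ⟨t, ht⟩ := exists_finset_forall_mem_stdSimplex_le_mul (𝒳 := 𝒳) (Real.one_lt_exp_iff.2 hδ)
  have hnonneg (q : stdSimplex ℝ 𝒳) (n : ℕ) (x : Fin n → 𝒳) : 0 ≤ iidSource q n x :=
    iidSource_nonneg q.2.1 x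
  refine ⟨t.card, fun n x => ∑ q ∈ t, iidSource q n x,
    fun n x => Finset.sum_nonneg fun q _ => hnonneg q n x, fun n => ?_, fun p hp n x => ?_⟩
  · rw [Finset.sum_comm, Finset.sum_congr rfl fun q _ => (iidSource_mem_stdSimplex q.2 n).2,
      Finset.sum_const, nsmul_eq_mul, mul_one]
  · obtain ⟨q, hqt, hpq⟩ := ht p hp
    calc iidSource p n x ≤ ∏ i, (Real.exp δ * (q : 𝒳 → ℝ) (x i)) :=
          Finset.prod_le_prod (fun i _ => hp.1 _) fun i _ => hpq (x i)
      _ = Real.exp (n * δ) * iidSource q n x := by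
          rw [Finset.prod_mul_distrib, Finset.prod_const, Finset.card_univ, Fintype.card_fin,
            ← Real.exp_nat_mul, iidSource]
      _ ≤ Real.exp (n * δ) * ∑ q ∈ t, iidSource q n x := by
          gcongr
          exact Finset.single_le_sum (f := fun q : stdSimplex ℝ 𝒳 => iidSource q n x)
            (fun q _ => hnonneg q n x) hqt

end UniversalMajorant

section MixedSource

variable {𝒳 Θ : Type*} [MeasurableSpace Θ]

/-- The mixed memoryless source `x ↦ ∫ ∏ᵢ P_θ(xᵢ) dw(θ)`. -/
noncomputable def mixedSource (w : Measure Θ) (P : Θ → 𝒳 → ℝ) (n : ℕ) (x : Fin n → 𝒳) : ℝ :=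
  ∫ θ, iidSource (P θ) n x ∂w

variable [Fintype 𝒳] {w : Measure Θ} {P : Θ → 𝒳 → ℝ} {n : ℕ}

lemma measurable_KL_left (hmeas : ∀ a, Measurable fun θ => P θ a) (Q : 𝒳 → ℝ) :
    Measurable fun θ => KL (P θ) Q :=
  Finset.measurable_fun_sum _ fun a _ => (hmeas a).mul ((hmeas a).div_const _).log

lemma integrable_iidSource [IsFiniteMeasure w] (hmeas : ∀ a, Measurable fun θ => P θ a)
    (hP : ∀ θ, P θ ∈ stdSimplex ℝ 𝒳) (x : Fin n → 𝒳) :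
    Integrable (fun θ => iidSource (P θ) n x) w := by
  refine .of_bound (C := 1)
    (Finset.measurable_fun_prod _ fun i _ => hmeas (x i)).aestronglyMeasurable
    (.of_forall fun θ => ?_)
  obtain ⟨hnonneg, hle⟩ := mem_Icc_of_mem_stdSimplex (iidSource_mem_stdSimplex (hP θ) n) x
  rwa [Real.norm_of_nonneg hnonneg]

lemma integrable_indicator_iidSource [IsFiniteMeasure w]
    (hmeas : ∀ a, Measurable fun θ => P θ a) (hP : ∀ θ, P θ ∈ stdSimplex ℝ 𝒳)
    (A : Set (Fin n → 𝒳)) (x : Fin n → 𝒳) :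
    Integrable (fun θ => A.indicator (iidSource (P θ) n) x) w := by
  by_cases hx : x ∈ A
  · simpa only [Set.indicator_of_mem hx] using integrable_iidSource hmeas hP x
  · simpa only [Set.indicator_of_notMem hx] using integrable_const (0 : ℝ)

lemma integrable_prob_iidSource [IsFiniteMeasure w] (hmeas : ∀ a, Measurable fun θ => P θ a)
    (hP : ∀ θ, P θ ∈ stdSimplex ℝ 𝒳) (A : Set (Fin n → 𝒳)) :
    Integrable (fun θ => prob (iidSource (P θ) n) A) w :=
  integrable_finsetSum _ fun x _ => integrable_indicator_iidSource hmeas hP A x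

lemma prob_mixedSource [IsFiniteMeasure w] (hmeas : ∀ a, Measurable fun θ => P θ a)
    (hP : ∀ θ, P θ ∈ stdSimplex ℝ 𝒳) (A : Set (Fin n → 𝒳)) :
    prob (mixedSource w P n) A = ∫ θ, prob (iidSource (P θ) n) A ∂w := by
  simp only [prob]
  rw [integral_finsetSum _ fun x _ => integrable_indicator_iidSource hmeas hP A x]
  refine Finset.sum_congr rfl fun x _ => ?_
  by_cases hx : x ∈ A
  · simp only [Set.indicator_of_mem hx, mixedSource]
  · simp only [Set.indicator_of_notMem hx, integral_zero]

lemma mixedSource_mem_stdSimplex [IsProbabilityMeasure w]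
    (hmeas : ∀ a, Measurable fun θ => P θ a) (hP : ∀ θ, P θ ∈ stdSimplex ℝ 𝒳) (n : ℕ) :
    mixedSource w P n ∈ stdSimplex ℝ (Fin n → 𝒳) := by
  refine ⟨fun x => integral_nonneg fun θ => iidSource_nonneg (hP θ).1 x, ?_⟩
  rw [← prob_univ, prob_mixedSource hmeas hP]
  simp only [prob_univ, (iidSource_mem_stdSimplex (hP _) n).2, integral_const, probReal_univ,
    smul_eq_mul, mul_one]

lemma prob_mixedSource_le_measureReal_add [IsProbabilityMeasure w]
    (hmeas : ∀ a, Measurable fun θ => P θ a) (hP : ∀ θ, P θ ∈ stdSimplex ℝ 𝒳)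
    {S : Set Θ} (hS : MeasurableSet S) {A : Set (Fin n → 𝒳)} {b : ℝ} (hb : 0 ≤ b)
    (h : ∀ θ ∉ S, prob (iidSource (P θ) n) A ≤ b) :
    prob (mixedSource w P n) A ≤ w.real S + b := by
  have hind : Integrable (S.indicator fun _ => (1 : ℝ)) w := (integrable_const 1).indicator hS
  calc prob (mixedSource w P n) A
      = ∫ θ, prob (iidSource (P θ) n) A ∂w := prob_mixedSource hmeas hP A
    _ ≤ ∫ θ, (S.indicator (fun _ => (1 : ℝ)) θ + b) ∂w := by
      refine integral_mono (integrable_prob_iidSource hmeas hP A)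
        (hind.add (integrable_const b)) fun θ => ?_
      by_cases hθ : θ ∈ S
      · have := prob_le_one_of_mem_stdSimplex (iidSource_mem_stdSimplex (hP θ) n) A
        simpa only [Set.indicator_of_mem hθ] using this.trans (le_add_of_nonneg_right hb)
      · simpa only [Set.indicator_of_notMem hθ, zero_add] using h θ hθ
    _ = w.real S + b := by
      rw [integral_add hind (integrable_const b), integral_indicator_const _ hS]
      simp only [smul_eq_mul, mul_one, integral_const, probReal_univ, one_mul]

end MixedSource

section GeneralSource

open Filter Topology

variable {𝒳 : Type*} [Fintype 𝒳] {X Xbar : (n : ℕ) → (Fin n → 𝒳) → ℝ}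
  {A : (n : ℕ) → Set (Fin n → 𝒳)} {n : ℕ} {ε r : ℝ}

/-- The exponent `(1/n) log (1/λ_n)` of the type II error. Its value is `0` both at `n = 0` and
when `λ_n = 0`. -/
noncomputable def typeIIExponent (Xbar : (n : ℕ) → (Fin n → 𝒳) → ℝ)
    (A : (n : ℕ) → Set (Fin n → 𝒳)) (n : ℕ) : ℝ :=
  (1 / (n : ℝ)) * Real.log (1 / typeII Xbar A n)

lemma typeIIExponent_eq (Xbar : (n : ℕ) → (Fin n → 𝒳) → ℝ) (A : (n : ℕ) → Set (Fin n → 𝒳))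
    (n : ℕ) : typeIIExponent Xbar A n = (n : ℝ)⁻¹ * -Real.log (typeII Xbar A n) := by
  rw [typeIIExponent, one_div, one_div, Real.log_inv]

lemma typeIIExponent_nonneg (hXbar : Xbar n ∈ stdSimplex ℝ (Fin n → 𝒳)) :
    0 ≤ typeIIExponent Xbar A n := by
  rw [typeIIExponent_eq]
  exact mul_nonneg (by positivity) <| neg_nonneg.2 <|
    Real.log_nonpos (prob_nonneg hXbar.1 _) (prob_le_one_of_mem_stdSimplex hXbar _)

lemma typeII_le_exp_of_le_typeIIExponent (hXbar : ∀ x, 0 ≤ Xbar n x) (hn : 0 < n)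
    (h : r ≤ typeIIExponent Xbar A n) : typeII Xbar A n ≤ Real.exp (-(n * r)) := by
  have hnonneg : 0 ≤ typeII Xbar A n := prob_nonneg hXbar _
  rcases hnonneg.eq_or_lt with hzero | hpos
  · rw [← hzero]
    positivity
  · rw [typeIIExponent_eq, le_inv_mul_iff₀ (Nat.cast_pos.2 hn)] at h
    exact (Real.log_le_iff_le_exp hpos).1 (by linarith)

lemma le_typeIIExponent_of_typeII_le_exp (hn : 0 < n) (hpos : 0 < typeII Xbar A n)
    (h : typeII Xbar A n ≤ Real.exp (-(n * r))) : r ≤ typeIIExponent Xbar A n := by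
  rw [typeIIExponent_eq, le_inv_mul_iff₀ (Nat.cast_pos.2 hn)]
  linarith [(Real.log_le_iff_le_exp hpos).2 h]

lemma typeII_pos_of_typeI_lt_one (hX : X n ∈ stdSimplex ℝ (Fin n → 𝒳))
    (hXbar : ∀ x, 0 < Xbar n x) (h : typeI X A n < 1) : 0 < typeII Xbar A n := by
  have hA : (A n).Nonempty := by
    by_contra hA
    rw [Set.not_nonempty_iff_eq_empty] at hA
    rw [typeI, hA, Set.compl_empty, prob_univ, hX.2] at h
    exact h.false
  obtain ⟨x, hx⟩ := hA
  exact (hXbar x).trans_le (apply_le_prob (fun y => (hXbar y).le) hx)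

lemma limsup_typeI_le_of_tendsto (hX : ∀ n, X n ∈ stdSimplex ℝ (Fin n → 𝒳)) {u : ℕ → ℝ}
    (hle : ∀ᶠ n in atTop, typeI X A n ≤ u n) (hu : Tendsto u atTop (𝓝 ε)) :
    limsup (typeI X A) atTop ≤ ε := by
  rw [← hu.limsup_eq]
  refine limsup_le_limsup hle (IsBoundedUnder.isCoboundedUnder_le ?_) hu.isBoundedUnder_le
  exact isBoundedUnder_of ⟨0, fun n => prob_nonneg (hX n).1 _⟩

lemma le_limsup_typeI_of_tendsto (hX : ∀ n, X n ∈ stdSimplex ℝ (Fin n → 𝒳)) {u : ℕ → ℝ}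
    (hle : ∀ᶠ n in atTop, u n ≤ typeI X A n) (hu : Tendsto u atTop (𝓝 ε)) :
    ε ≤ limsup (typeI X A) atTop := by
  rw [← hu.limsup_eq]
  refine limsup_le_limsup hle hu.isCoboundedUnder_le ?_
  exact isBoundedUnder_of ⟨1, fun n => prob_le_one_of_mem_stdSimplex (hX n) _⟩

lemma epsAchievable_zero (X : (n : ℕ) → (Fin n → 𝒳) → ℝ)
    (hXbar : ∀ n, Xbar n ∈ stdSimplex ℝ (Fin n → 𝒳)) (hε : 0 ≤ ε) :
    EpsAchievable X Xbar ε 0 := by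
  refine ⟨fun _ => Set.univ, ?_, ?_⟩
  · have : typeI X (fun _ => Set.univ) = fun _ => 0 := by
      funext n
      simp only [typeI, prob, Set.compl_univ, Set.indicator_empty, Finset.sum_const_zero]
    rwa [this, limsup_const]
  · simp only [typeII, prob_univ, (hXbar _).2, div_one, Real.log_one, mul_zero, liminf_const,
      le_refl]

/-- The Neyman–Pearson regions `{x : (1/n) log (M_n(x) / X̄_n(x)) ≥ r}`, written without logarithm
or division so that zeros of `M` and `X̄` need no convention. -/
def likelihoodRatioRegion (M Xbar : (n : ℕ) → (Fin n → 𝒳) → ℝ) (r : ℝ) (n : ℕ) :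
    Set (Fin n → 𝒳) :=
  {x | Real.exp (n * r) * Xbar n x ≤ M n x}

lemma typeII_likelihoodRatioRegion_le {M : (n : ℕ) → (Fin n → 𝒳) → ℝ} (hM : ∀ x, 0 ≤ M n x) :
    typeII Xbar (likelihoodRatioRegion M Xbar r) n ≤ Real.exp (-(n * r)) * ∑ x, M n x := by
  rw [Real.exp_neg, le_inv_mul_iff₀ (Real.exp_pos _)]
  exact mul_prob_le_sum hM fun _ hx => hx

end GeneralSource

section MemorylessAlternative

open Filter Topology

variable {𝒳 Θ : Type*} [Fintype 𝒳] [MeasurableSpace Θ] {w : Measure Θ} [IsProbabilityMeasure w]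
  {P : Θ → 𝒳 → ℝ} {Q : 𝒳 → ℝ} {A : (n : ℕ) → Set (Fin n → 𝒳)} {n : ℕ} {ε R γ δ : ℝ}

lemma typeIIExponent_iidSource_le (hQ : Q ∈ stdSimplex ℝ 𝒳) (hQ0 : ∀ a, 0 < Q a) :
    typeIIExponent (iidSource Q) A n ≤ ∑ a, -Real.log (Q a) := by
  have hlog (a : 𝒳) : 0 ≤ -Real.log (Q a) :=
    neg_nonneg.2 (Real.log_nonpos (hQ.1 a) (mem_Icc_of_mem_stdSimplex hQ a).2)
  have hsum : 0 ≤ ∑ a, -Real.log (Q a) := Finset.sum_nonneg fun a _ => hlog a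
  rw [typeIIExponent_eq]
  rcases n.eq_zero_or_pos with rfl | hn
  · simpa only [Nat.cast_zero, inv_zero, zero_mul] using hsum
  rcases (A n).eq_empty_or_nonempty with hA | ⟨x, hx⟩
  · simpa only [typeII, prob, hA, Set.indicator_empty, Finset.sum_const_zero, Real.log_zero,
      neg_zero, mul_zero] using hsum
  rw [inv_mul_le_iff₀ (Nat.cast_pos.2 hn)]
  calc -Real.log (typeII (iidSource Q) A n)
      ≤ -Real.log (iidSource Q n x) :=
        neg_le_neg <| Real.log_le_log (iidSource_pos hQ0 x) <|
          apply_le_prob (iidSource_nonneg hQ.1) hx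
    _ = ∑ i, -Real.log (Q (x i)) := by
        rw [iidSource, Real.log_prod fun i _ => (hQ0 _).ne', Finset.sum_neg_distrib]
    _ ≤ ∑ _i : Fin n, ∑ a, -Real.log (Q a) :=
        Finset.sum_le_sum fun i _ =>
          Finset.single_le_sum (fun a _ => hlog a) (Finset.mem_univ (x i))
    _ = n * ∑ a, -Real.log (Q a) := by
        rw [Finset.sum_const, Finset.card_univ, Fintype.card_fin, nsmul_eq_mul]

lemma bddAbove_epsAchievable_iidSource (X : (n : ℕ) → (Fin n → 𝒳) → ℝ)
    (hQ : Q ∈ stdSimplex ℝ 𝒳) (hQ0 : ∀ a, 0 < Q a) (ε : ℝ) :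
    BddAbove {R | EpsAchievable X (iidSource Q) ε R} := by
  refine ⟨∑ a, -Real.log (Q a), fun R ⟨A, _, hR⟩ => hR.trans ?_⟩
  refine liminf_le_of_frequently_le
    (Frequently.of_forall fun n => typeIIExponent_iidSource_le hQ hQ0) ?_
  exact isBoundedUnder_of
    ⟨0, fun n => typeIIExponent_nonneg (iidSource_mem_stdSimplex hQ n)⟩

lemma tendsto_const_div_natCast_mul (V : ℝ) {c : ℝ} (hc : 0 < c) :
    Tendsto (fun n : ℕ => V / (n * c)) atTop (𝓝 0) :=
  tendsto_const_nhds.div_atTop (tendsto_natCast_atTop_atTop.atTop_mul_const hc)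

lemma prob_iidSource_le_of_typeII_le_exp {p : 𝒳 → ℝ} (hp : p ∈ stdSimplex ℝ 𝒳)
    (hQ0 : ∀ a, 0 < Q a) (hn : 0 < n) (hγ : 0 < γ) (hKL : KL p Q ≤ R - 2 * γ)
    (hII : typeII (iidSource Q) A n ≤ Real.exp (-(n * R))) :
    prob (iidSource p n) (A n) ≤
      llrSecondMomentBound Q / (n * γ ^ 2) + Real.exp (-(n * γ)) := by
  calc prob (iidSource p n) (A n)
      ≤ prob (iidSource p n)
            {x | Real.exp (n * (KL p Q + γ)) * iidSource Q n x < iidSource p n x} +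
          Real.exp (n * (KL p Q + γ)) * typeII (iidSource Q) A n :=
        prob_le_prob_likelihood_add (iidSource_nonneg hp.1)
          (iidSource_nonneg fun a => (hQ0 a).le) (by positivity) (A n)
    _ ≤ llrSecondMomentBound Q / (n * γ ^ 2) +
          Real.exp (n * (R - γ)) * Real.exp (-(n * R)) := by
        gcongr
        · exact prob_exp_KL_add_mul_lt_iidSource_le hp hQ0 hn hγ
        · exact prob_nonneg (iidSource_nonneg fun a => (hQ0 a).le) _
        · linarith
    _ = llrSecondMomentBound Q / (n * γ ^ 2) + Real.exp (-(n * γ)) := by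
        rw [← Real.exp_add]
        ring_nf

lemma le_typeI_mixedSource_of_typeII_le_exp (hmeas : ∀ a, Measurable fun θ => P θ a)
    (hP : ∀ θ, P θ ∈ stdSimplex ℝ 𝒳) (hQ0 : ∀ a, 0 < Q a) (hn : 0 < n) (hγ : 0 < γ)
    (hII : typeII (iidSource Q) A n ≤ Real.exp (-(n * R))) :
    w.real {θ | KL (P θ) Q < R - 2 * γ} -
        (llrSecondMomentBound Q / (n * γ ^ 2) + Real.exp (-(n * γ))) ≤
      typeI (mixedSource w P) A n := by
  have hS : MeasurableSet {θ | KL (P θ) Q < R - 2 * γ} :=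
    measurableSet_lt (measurable_KL_left hmeas Q) measurable_const
  have hV := llrSecondMomentBound_nonneg Q
  have hprob := prob_mixedSource_le_measureReal_add (w := w) hmeas hP hS.compl (by positivity)
    fun θ hθ => prob_iidSource_le_of_typeII_le_exp (hP θ) hQ0 hn hγ
      (Set.notMem_compl_iff.1 hθ).le hII
  rw [probReal_compl_eq_one_sub hS] at hprob
  rw [typeI, prob_compl_of_mem_stdSimplex (mixedSource_mem_stdSimplex hmeas hP n)]
  linarith

theorem measureReal_KL_lt_le_of_epsAchievable (hmeas : ∀ a, Measurable fun θ => P θ a)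
    (hP : ∀ θ, P θ ∈ stdSimplex ℝ 𝒳) (hQ : Q ∈ stdSimplex ℝ 𝒳) (hQ0 : ∀ a, 0 < Q a)
    (hδ : 0 < δ) (h : EpsAchievable (mixedSource w P) (iidSource Q) ε R) :
    w.real {θ | KL (P θ) Q < R - δ} ≤ ε := by
  obtain ⟨A, hI, hII⟩ := h
  obtain ⟨γ, hγ, rfl⟩ : ∃ γ, 0 < γ ∧ δ = 3 * γ := ⟨δ / 3, by positivity, by ring⟩
  have hexponent : ∀ᶠ n in atTop, R - γ < typeIIExponent (iidSource Q) A n :=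
    eventually_lt_of_lt_liminf (lt_of_lt_of_le (by linarith) hII) <| isBoundedUnder_of
      ⟨0, fun n => typeIIExponent_nonneg (iidSource_mem_stdSimplex hQ n)⟩
  have herror : Tendsto (fun n : ℕ => llrSecondMomentBound Q / (n * γ ^ 2) + Real.exp (-(n * γ)))
      atTop (𝓝 0) := by
    simpa only [add_zero, Function.comp_def] using
      (tendsto_const_div_natCast_mul (llrSecondMomentBound Q) (pow_pos hγ 2)).add
        (Real.tendsto_exp_neg_atTop_nhds_zero.comp
          (tendsto_natCast_atTop_atTop.atTop_mul_const hγ))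
  have hlimit := herror.const_sub (w.real {θ | KL (P θ) Q < R - 3 * γ})
  rw [sub_zero] at hlimit
  refine (le_limsup_typeI_of_tendsto (mixedSource_mem_stdSimplex hmeas hP) ?_ hlimit).trans hI
  filter_upwards [hexponent, eventually_gt_atTop 0] with n hn hn0
  have hbound := le_typeI_mixedSource_of_typeII_le_exp (w := w) hmeas hP hQ0 hn0 hγ <|
    typeII_le_exp_of_le_typeIIExponent (iidSource_nonneg hQ.1) hn0 hn.le
  rwa [show R - γ - 2 * γ = R - 3 * γ by ring] at hbound

lemma typeI_mixedSource_likelihoodRatioRegion_le (hmeas : ∀ a, Measurable fun θ => P θ a)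
    (hP : ∀ θ, P θ ∈ stdSimplex ℝ 𝒳) (hQ0 : ∀ a, 0 < Q a) (hn : 0 < n) (hγ : 0 < γ)
    {M : (n : ℕ) → (Fin n → 𝒳) → ℝ}
    (hM : ∀ θ x, iidSource (P θ) n x ≤ Real.exp (n * γ) * M n x) :
    typeI (mixedSource w P) (likelihoodRatioRegion M (iidSource Q) (R - 2 * γ)) n ≤
      w.real {θ | KL (P θ) Q < R} + llrSecondMomentBound Q / (n * γ ^ 2) := by
  have hV := llrSecondMomentBound_nonneg Q
  refine prob_mixedSource_le_measureReal_add hmeas hP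
    (measurableSet_lt (measurable_KL_left hmeas Q) measurable_const) (by positivity)
    fun θ hθ => ?_
  refine (prob_le_prob_of_forall_ne_zero (iidSource_nonneg (hP θ).1) fun x hx _ => ?_).trans
    (prob_iidSource_lt_exp_KL_sub_mul_le (hP θ) hQ0 hn hγ)
  have hKL : R ≤ KL (P θ) Q := not_lt.1 hθ
  have hQx := iidSource_pos hQ0 x
  calc iidSource (P θ) n x ≤ Real.exp (n * γ) * M n x := hM θ x
    _ < Real.exp (n * γ) * (Real.exp (n * (R - 2 * γ)) * iidSource Q n x) := by
      gcongr
      exact not_le.1 hx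
    _ = Real.exp (n * (R - γ)) * iidSource Q n x := by
      rw [← mul_assoc, ← Real.exp_add]
      ring_nf
    _ ≤ Real.exp (n * (KL (P θ) Q - γ)) * iidSource Q n x := by gcongr

theorem epsAchievable_of_measureReal_KL_lt_le (hmeas : ∀ a, Measurable fun θ => P θ a)
    (hP : ∀ θ, P θ ∈ stdSimplex ℝ 𝒳) (hQ : Q ∈ stdSimplex ℝ 𝒳) (hQ0 : ∀ a, 0 < Q a)
    (hε : ε < 1) (hδ : 0 < δ) (h : w.real {θ | KL (P θ) Q < R} ≤ ε) :
    EpsAchievable (mixedSource w P) (iidSource Q) ε (R - δ) := by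
  obtain ⟨γ, hγ, rfl⟩ : ∃ γ, 0 < γ ∧ δ = 3 * γ := ⟨δ / 3, by positivity, by ring⟩
  obtain ⟨K, M, hM0, hMK, hM⟩ := exists_iidSource_le_exp_mul 𝒳 hγ
  set A := likelihoodRatioRegion M (iidSource Q) (R - 2 * γ)
  have hI : ∀ᶠ n : ℕ in atTop,
      typeI (mixedSource w P) A n ≤ ε + llrSecondMomentBound Q / (n * γ ^ 2) := by
    filter_upwards [eventually_gt_atTop 0] with n hn
    have hbound := typeI_mixedSource_likelihoodRatioRegion_le (w := w) (R := R) hmeas hP hQ0 hn hγ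
      fun θ => hM _ (hP θ) n
    exact hbound.trans (by gcongr)
  have hlimit : Tendsto (fun n : ℕ => ε + llrSecondMomentBound Q / (n * γ ^ 2)) atTop (𝓝 ε) := by
    simpa only [add_zero] using (tendsto_const_div_natCast_mul _ (pow_pos hγ 2)).const_add ε
  have hK : ∀ᶠ n : ℕ in atTop, K ≤ Real.exp (n * γ) :=
    (Real.tendsto_exp_atTop.comp
      (tendsto_natCast_atTop_atTop.atTop_mul_const hγ)).eventually_ge_atTop K
  have hX := mixedSource_mem_stdSimplex (w := w) hmeas hP
  refine ⟨A, limsup_typeI_le_of_tendsto hX hI hlimit, le_liminf_of_le ?_ ?_⟩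
  · exact (isBoundedUnder_of ⟨_, fun n =>
      typeIIExponent_iidSource_le hQ hQ0⟩).isCoboundedUnder_ge
  filter_upwards [hI, hlimit.eventually_lt_const hε, hK, eventually_gt_atTop 0]
    with n hIn hlt hKn hn
  refine le_typeIIExponent_of_typeII_le_exp hn
    (typeII_pos_of_typeI_lt_one (hX n) (iidSource_pos hQ0) (hIn.trans_lt hlt)) ?_
  calc typeII (iidSource Q) A n ≤ Real.exp (-(n * (R - 2 * γ))) * K :=
        hMK n ▸ typeII_likelihoodRatioRegion_le (hM0 n)
    _ ≤ Real.exp (-(n * (R - 2 * γ))) * Real.exp (n * γ) := by gcongr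
    _ = Real.exp (-(n * (R - 3 * γ))) := by
        rw [← Real.exp_add]
        ring_nf

end MemorylessAlternative

lemma csSup_eq_csSup_of_forall_sub_mem {S T : Set ℝ} (hne : S.Nonempty) (hbdd : BddAbove S)
    (hST : ∀ R ∈ S, ∀ δ > 0, R - δ ∈ T) (hTS : ∀ R ∈ T, ∀ δ > 0, R - δ ∈ S) :
    sSup S = sSup T := by
  have hub {U V : Set ℝ} (h : ∀ R ∈ U, ∀ δ > 0, R - δ ∈ V) {b : ℝ} (hb : b ∈ upperBounds V) :
      b ∈ upperBounds U := fun R hR =>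
    le_of_forall_pos_le_add fun δ hδ => sub_le_iff_le_add.1 (hb (h R hR δ hδ))
  have hneT : T.Nonempty := hne.elim fun R hR => ⟨R - 1, hST R hR 1 one_pos⟩
  have hlub : IsLUB T (sSup S) :=
    ⟨hub hTS (isLUB_csSup hne hbdd).1, fun _ hb => (isLUB_csSup hne hbdd).2 (hub hST hb)⟩
  exact (hlub.csSup_eq hneT).symm

/-- **Theorem (Han):** first-order `ε`-optimum exponent for a mixed memoryless
null hypothesis `P_{X^n}(x) = ∫_Θ ∏ᵢ P_θ(xᵢ) dw(θ)` against a stationary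
memoryless alternative `P_{X̄^n}(x) = ∏ᵢ P_{X̄}(xᵢ)`:
`B_ε(X‖X̄) = sup{ R : w({θ : D(P_θ‖P_{X̄}) < R}) ≤ ε }`. -/
theorem stmt_7 {𝒳 Θ : Type*} [Fintype 𝒳] [MeasurableSpace Θ]
    (w : Measure Θ) [IsProbabilityMeasure w]
    (P : Θ → 𝒳 → ℝ)
    (hmeas : ∀ x : 𝒳, Measurable fun θ => P θ x)
    (hdist : ∀ θ, (∀ x, 0 ≤ P θ x) ∧ (∑ x, P θ x) = 1)
    (Q : 𝒳 → ℝ) (hQ0 : ∀ x, 0 < Q x) (hQ1 : ∑ x, Q x = 1)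
    (ε : ℝ) (hε0 : 0 ≤ ε) (hε1 : ε < 1) :
    Beps (fun n x => ∫ θ, (∏ i, P θ (x i)) ∂w) (fun n x => ∏ i, Q (x i)) ε =
      sSup {R : ℝ | (w {θ | KL (P θ) Q < R}).toReal ≤ ε} := by
  have hQ : Q ∈ stdSimplex ℝ 𝒳 := ⟨fun a => (hQ0 a).le, hQ1⟩
  exact csSup_eq_csSup_of_forall_sub_mem
    ⟨0, epsAchievable_zero (mixedSource w P) (iidSource_mem_stdSimplex hQ) hε0⟩
    (bddAbove_epsAchievable_iidSource (mixedSource w P) hQ hQ0 ε)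
    (fun _ hR _ hδ => measureReal_KL_lt_le_of_epsAchievable hmeas hdist hQ hQ0 hδ hR)
    (fun _ hR _ hδ => epsAchievable_of_measureReal_KL_lt_le hmeas hdist hQ hQ0 hε1 hδ hR)
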